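/- arXiv:math/0703050 — 5 statements merged into one kernel-verified Lean document; each statement's English description precedes it below -/
import Mathlib

section
/- Let k ≥ 1 be an integer, let J ≥ 0, and let m_1, …, m_J be integers with m_j ≥ 2 for every j that are pairwise relatively prime (gcd(m_i, m_j) = 1 for i ≠ j). If Σ_{j=1}^J (1 − 1/m_j) = 2 − 3/k as rational numbers, then either k = 2, J = 1 and m_1 = 2, or k = 90, J = 3 and {m_1, m_2, m_3} = {2, 3, 5} as multisets. -/
/-!
Each term of the sum is at least `1/2`, so `J ≤ 3`. For `J ≤ 2`, padding the tuple with ones turns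
the equation into `1/a + 1/b = 3/k`, that is `k(a + b) = 3ab`, with `a`, `b` coprime; as `a + b` is
coprime to `ab`, it divides `3`. For `J = 3`, the equation reads `1/a + 1/b + 1/c = 1 + 3/k > 1`,
and the only pairwise coprime solution of the ADE inequality with entries at least `2` is
`{2, 3, 5}`, for which `3/k = 1/30`.
-/

theorem add_dvd_of_mul_add_eq_mul_mul {a b k n : ℕ} (hab : a.Coprime b)
    (h : k * (a + b) = n * (a * b)) : a + b ∣ n := by
  have hcop : (a + b).Coprime (a * b) :=
    Nat.Coprime.mul_right (by simpa using hab.symm) (by simpa using hab)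
  exact hcop.dvd_of_dvd_mul_right ⟨k, by rw [← h, mul_comm]⟩

theorem mul_add_eq_mul_mul_of_one_div_add_one_div_eq_div {a b k n : ℕ} (ha : a ≠ 0) (hb : b ≠ 0)
    (hk : k ≠ 0) (h : 1 / (a : ℚ) + 1 / b = n / k) : k * (a + b) = n * (a * b) := by
  field_simp at h
  have : (k : ℚ) * (a + b) = n * (a * b) := by linarith
  exact_mod_cast this

theorem add_eq_three_and_eq_two_of_one_div_add_one_div_eq {a b k : ℕ} (ha : a ≠ 0) (hb : b ≠ 0)
    (hk : k ≠ 0) (hab : a.Coprime b) (h : 1 / (a : ℚ) + 1 / b = 3 / k) : a + b = 3 ∧ k = 2 := by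
  have hmul : k * (a + b) = 3 * (a * b) :=
    mul_add_eq_mul_mul_of_one_div_add_one_div_eq_div ha hb hk (by exact_mod_cast h)
  have hadd : a + b = 3 := by
    have := (Nat.dvd_prime Nat.prime_three).mp (add_dvd_of_mul_add_eq_mul_mul hab hmul)
    omega
  have hprod : a * b = 2 := by
    obtain ⟨rfl, rfl⟩ | ⟨rfl, rfl⟩ : (a = 1 ∧ b = 2) ∨ (a = 2 ∧ b = 1) := by omega
    all_goals rfl
  rw [hadd, hprod] at hmul
  exact ⟨hadd, by omega⟩

section ADE

open ADEInequality

theorem eq_E8_of_admissible_of_pairwise_coprime {s : Multiset ℕ+} (hs : Admissible s)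
    (hone : 1 ∉ s) (hcop : s.Pairwise PNat.Coprime) : s = E8 := by
  have coprime_of_triple (p q r : ℕ+) (h : Multiset.Pairwise PNat.Coprime {p, q, r}) :
      p.Coprime q ∧ p.Coprime r ∧ q.Coprime r := by
    have : Std.Symm PNat.Coprime := ⟨fun _ _ => PNat.Coprime.symm⟩
    have hlist : [p, q, r].Pairwise PNat.Coprime := Multiset.pairwise_coe_iff_pairwise.mp h
    simpa [and_assoc] using hlist
  rcases hs with ⟨q, r, rfl⟩ | ⟨r, rfl⟩ | rfl | rfl | rfl
  · simp [A'] at hone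
  · exact absurd (coprime_of_triple 2 2 r hcop).1 (by norm_num [← PNat.coprime_coe])
  · exact absurd (coprime_of_triple 2 3 3 hcop).2.2 (by norm_num [← PNat.coprime_coe])
  · exact absurd (coprime_of_triple 2 3 4 hcop).2.1 (by norm_num [← PNat.coprime_coe])
  · rfl

theorem eq_two_three_five_of_one_lt_sum_one_div {a b c : ℕ} (ha : 2 ≤ a) (hb : 2 ≤ b) (hc : 2 ≤ c)
    (hab : a.Coprime b) (hac : a.Coprime c) (hbc : b.Coprime c)
    (h : 1 < 1 / (a : ℚ) + 1 / b + 1 / c) : ({a, b, c} : Multiset ℕ) = {2, 3, 5} := by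
  lift a to ℕ+ using by omega
  lift b to ℕ+ using by omega
  lift c to ℕ+ using by omega
  have hadm : Admissible {a, b, c} := by
    rw [← classification, sumInv_pqr]
    simpa only [one_div] using h
  have hone : (1 : ℕ+) ∉ ({a, b, c} : Multiset ℕ+) := by
    simp only [Multiset.insert_eq_cons, Multiset.mem_cons, Multiset.mem_singleton, not_or]
    refine ⟨?_, ?_, ?_⟩ <;> rintro rfl <;> simp at ha hb hc
  have hcop : Multiset.Pairwise PNat.Coprime {a, b, c} :=
    ⟨[a, b, c], rfl, by
      simp [PNat.coprime_coe.mp hab, PNat.coprime_coe.mp hac, PNat.coprime_coe.mp hbc]⟩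
  simpa [E8, E'] using
    congrArg (Multiset.map ((↑) : ℕ+ → ℕ)) (eq_E8_of_admissible_of_pairwise_coprime hadm hone hcop)

end ADE

theorem eq_ninety_of_one_div_add_eq_one_add_three_div {a b c k : ℕ}
    (hs : ({a, b, c} : Multiset ℕ) = {2, 3, 5})
    (h : 1 / (a : ℚ) + 1 / b + 1 / c = 1 + 3 / k) : k = 90 := by
  have hsum : 1 / (a : ℚ) + (1 / b + 1 / c) = 1 / 2 + (1 / 3 + 1 / 5) := by
    simpa using congrArg (fun s : Multiset ℕ => (s.map fun n => 1 / (n : ℚ)).sum) hs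
  have hinv : (k : ℚ)⁻¹ = 90⁻¹ := by
    rw [div_eq_mul_inv 3] at h
    linarith
  exact_mod_cast inv_injective hinv

section SumBound

variable {ι K : Type*} [Field K] [LinearOrder K] [IsStrictOrderedRing K] {s : Finset ι} {x : ι → K}

theorem card_div_two_le_sum_one_sub_one_div (hx : ∀ i ∈ s, 2 ≤ x i) :
    (s.card : K) / 2 ≤ ∑ i ∈ s, (1 - 1 / x i) := by
  have hterm : ∀ i ∈ s, (1 / 2 : K) ≤ 1 - 1 / x i := fun i hi => by
    have := one_div_le_one_div_of_le two_pos (hx i hi)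
    linarith
  simpa [div_eq_mul_inv] using s.card_nsmul_le_sum _ _ hterm

theorem card_lt_four_of_sum_one_sub_one_div_lt_two (hx : ∀ i ∈ s, 2 ≤ x i)
    (h : ∑ i ∈ s, (1 - 1 / x i) < 2) : s.card < 4 := by
  have : (s.card : K) < 4 := by linarith [card_div_two_le_sum_one_sub_one_div hx]
  exact_mod_cast this

end SumBound

/-- The Diophantine analysis of Section 2: if `k ≥ 1` and `m_1, …, m_J ≥ 2` are
pairwise relatively prime with `Σ (1 - 1/m_j) = 2 - 3/k`, then either
`k = 2, J = 1, m_1 = 2`, or `k = 90, J = 3` and `{m_1, m_2, m_3} = {2, 3, 5}`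
as multisets. -/
theorem stmt_2 (k : ℕ) (hk : 1 ≤ k) (J : ℕ) (m : Fin J → ℕ)
    (hm : ∀ j, 2 ≤ m j)
    (hcop : ∀ i j, i ≠ j → Nat.gcd (m i) (m j) = 1)
    (hsum : ∑ j : Fin J, (1 - 1 / (m j : ℚ)) = 2 - 3 / (k : ℚ)) :
    (k = 2 ∧ J = 1 ∧ ∀ j, m j = 2) ∨
    (k = 90 ∧ J = 3 ∧ (↑(List.ofFn m) : Multiset ℕ) = ({2, 3, 5} : Multiset ℕ)) := by
  have hkpos : 0 < 3 / (k : ℚ) := by positivity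
  have hJ : J < 4 := by
    simpa using card_lt_four_of_sum_one_sub_one_div_lt_two (s := Finset.univ)
      (x := fun j => (m j : ℚ)) (fun j _ => by exact_mod_cast hm j) (by linarith)
  have hm0 (j : Fin J) : m j ≠ 0 := Nat.ne_zero_of_lt (hm j)
  have two_terms {a b : ℕ} (ha : a ≠ 0) (hb : b ≠ 0) (hab : a.Coprime b) :=
    add_eq_three_and_eq_two_of_one_div_add_one_div_eq ha hb (k := k) (by omega) hab
  interval_cases J <;>
    simp only [Fin.sum_univ_zero, Fin.sum_univ_one, Fin.sum_univ_two, Fin.sum_univ_three] at hsum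
  · have := two_terms one_ne_zero one_ne_zero (by simp) (by push_cast; linarith)
    omega
  · obtain ⟨hm3, rfl⟩ := two_terms (hm0 0) one_ne_zero (by simp) (by push_cast; linarith)
    exact Or.inl ⟨rfl, rfl, Fin.forall_fin_one.mpr (by omega)⟩
  · have := two_terms (hm0 0) (hm0 1) (hcop 0 1 (by decide)) (by linarith)
    have := hm 0
    have := hm 1
    omega
  · have hs : ({m 0, m 1, m 2} : Multiset ℕ) = {2, 3, 5} :=
      eq_two_three_five_of_one_lt_sum_one_div (hm 0) (hm 1) (hm 2) (hcop 0 1 (by decide))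
        (hcop 0 2 (by decide)) (hcop 1 2 (by decide)) (by linarith)
    exact Or.inr ⟨eq_ninety_of_one_div_add_eq_one_add_three_div hs (by linarith), rfl, hs⟩
end

section
/- For every pair (s,t) ∈ ℂ² and every point (x,y,z) ∈ ℂ³ satisfying t · x^h y^{k−h} = s · z^k, the point (X, Y, Z) := (x^d, y^d, R(x,y,z)) satisfies t' · X^h Y^{k−h} = s' · Z^k, where s' = s^d and t' = t^{d−kl} · ∏_{i=1}^l (t + c_i s)^k. (This says that f = [x^d : y^d : R] maps the fiber of the binomial pencil over [s:t] into the fiber over g[s:t] = [s^d : t^{d−kl}·∏_{i=1}^l (t + c_i s)^k].) -/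
/-!
On the fibre over `[s : t]` the two generators of the pencil satisfy `t * A = s * B`.
Hence, for a binary form `G` of degree `d`,
`A ^ d * G(s, t) = G(A * s, A * t) = G(s * A, s * B) = s ^ d * G(A, B)`.
Take `G(s, t) = t ^ m * ∏ i, (t + c i * s) ^ k`: along `f` the monomial `A` becomes `A ^ d`,
and since `B = z ^ k` the third coordinate `R` of `f` satisfies `R ^ k = G(A, B)`.
-/

section PencilForm

variable {R ι : Type*} [CommSemiring R] [Fintype ι] {k m : ℕ} {c : ι → R}

/-- The binary form `G(s, t) = t ^ m * ∏ i, (t + c i * s) ^ k` of degree `d = m + k * card ι`: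
the second coordinate of the map `g[s : t] = [s ^ d : G(s, t)]` induced on the base of the pencil.
The exponent `m` stands for `d - k * l`. -/
def pencilForm (k m : ℕ) (c : ι → R) (s t : R) : R :=
  t ^ m * ∏ i, (t + c i * s) ^ k

theorem pencilForm_mul_mul (r s t : R) :
    pencilForm k m c (r * s) (r * t) =
      r ^ (m + k * Fintype.card ι) * pencilForm k m c s t := by
  have factor_smul (i : ι) : r * t + c i * (r * s) = r * (t + c i * s) := by ring
  simp only [pencilForm, factor_smul, mul_pow, Finset.prod_mul_distrib, Finset.prod_const,
    Finset.card_univ]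
  ring

theorem pencilForm_mul_pow_eq_of_mul_eq_mul {s t A B : R} (hfib : t * A = s * B) :
    pencilForm k m c s t * A ^ (m + k * Fintype.card ι) =
      s ^ (m + k * Fintype.card ι) * pencilForm k m c A B :=
  calc
    _ = pencilForm k m c (A * s) (A * t) := by rw [pencilForm_mul_mul, mul_comm]
    _ = pencilForm k m c (s * A) (s * B) := by rw [mul_comm A s, mul_comm A t, hfib]
    _ = _ := pencilForm_mul_mul s A B

theorem pencilForm_pow_right (A z : R) :
    pencilForm k m c A (z ^ k) = (z ^ m * ∏ i, (z ^ k + c i * A)) ^ k := by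
  rw [pencilForm, mul_pow, Finset.prod_pow, pow_right_comm]

theorem stmt_4_general {d a b : ℕ} (hdeg : m + k * Fintype.card ι = d) {s t x y z : R}
    (hfib : t * (x ^ a * y ^ b) = s * z ^ k) :
    (t ^ m * ∏ i, (t + c i * s) ^ k) * ((x ^ d) ^ a * (y ^ d) ^ b) =
      s ^ d * (z ^ m * ∏ i, (z ^ k + c i * (x ^ a * y ^ b))) ^ k := by
  have monomial_pow : (x ^ d) ^ a * (y ^ d) ^ b = (x ^ a * y ^ b) ^ d := by
    rw [mul_pow, pow_right_comm x, pow_right_comm y]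
  rw [monomial_pow, ← pencilForm_pow_right, ← pencilForm, ← hdeg]
  exact pencilForm_mul_pow_eq_of_mul_eq_mul hfib

end PencilForm

/-- Case (ii) of the Main Theorem, pointwise: if `t·x^h y^(k-h) = s·z^k`, then the
point `(X, Y, Z) = (x^d, y^d, R(x,y,z))` satisfies `t'·X^h Y^(k-h) = s'·Z^k` with
`s' = s^d` and `t' = t^(d-kl) · ∏ (t + c_i s)^k`; i.e. `f = [x^d : y^d : R]` maps
the fiber of the binomial pencil over `[s:t]` into the fiber over `g[s:t]`. -/
theorem stmt_4 (k h d l : ℕ) (hk : 2 ≤ k) (hh0 : 0 < h) (hhk : h < k)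
    (hcop : Nat.gcd h k = 1) (hd : 2 ≤ d) (hld : k * l ≤ d)
    (c : Fin l → ℂ) (hc : ∀ i, c i ≠ 0)
    (s t x y z : ℂ)
    (hfib : t * (x ^ h * y ^ (k - h)) = s * z ^ k) :
    (t ^ (d - k * l) * ∏ i : Fin l, (t + c i * s) ^ k) *
        ((x ^ d) ^ h * (y ^ d) ^ (k - h)) =
      s ^ d *
        (z ^ (d - k * l) * ∏ i : Fin l, (z ^ k + c i * (x ^ h * y ^ (k - h)))) ^ k :=
  stmt_4_general (by rw [Fintype.card_fin, Nat.sub_add_cancel hld]) hfib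
end

section
/- For all nonzero complex numbers s and t, the polynomial s · x^h y^{k−h} + t · z^k is irreducible in ℂ[x,y,z]. (Hence every member of the binomial pencil other than the two distinguished members {x^h y^{k−h} = 0} and {z^k = 0} is an irreducible curve, so the binomial pencil is an irreducible pencil.) -/
open MvPolynomial

/-! If a monic `f` of degree `n` divides `Z ^ k - a`, then the norm `b` of the root `Z` of `f` in
`R[Z] / (f)` satisfies `b ^ k = a ^ n`. For a polynomial `a` whose degree in some variable is
coprime to `k`, comparing degrees gives `k ∣ n`, so `f` is either `1` or all of `Z ^ k - a`. -/

section PowSubC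

variable {R : Type*} [CommRing R] {a : R} {k : ℕ}

theorem exists_pow_eq_pow_natDegree_of_dvd_X_pow_sub_C {f : Polynomial R} (hf : f.Monic)
    (hdvd : f ∣ Polynomial.X ^ k - Polynomial.C a) : ∃ b : R, b ^ k = a ^ f.natDegree := by
  have root_pow : AdjoinRoot.root f ^ k = algebraMap R (AdjoinRoot f) a := by
    simpa [sub_eq_zero] using AdjoinRoot.mk_eq_zero.2 hdvd
  refine ⟨Algebra.norm R (AdjoinRoot.root f), ?_⟩
  rw [← map_pow, root_pow, Algebra.norm_algebraMap_of_basis (AdjoinRoot.powerBasis' hf).basis,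
    Fintype.card_fin, AdjoinRoot.powerBasis'_dim]

theorem irreducible_X_pow_sub_C_of_forall_dvd [IsDomain R] (hk : k ≠ 0)
    (h : ∀ (b : R) (n : ℕ), b ^ k = a ^ n → k ∣ n) :
    Irreducible (Polynomial.X ^ k - Polynomial.C a) := by
  have hmonic := Polynomial.monic_X_pow_sub_C a hk
  have hdeg := Polynomial.natDegree_X_pow_sub_C (n := k) (r := a)
  refine hmonic.irreducible_iff_natDegree.2 ⟨fun hone ↦ ?_, fun f g hf hg hfg ↦ ?_⟩
  · exact hk (by rw [← hdeg, hone, Polynomial.natDegree_one])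
  · have hadd : f.natDegree + g.natDegree = k := by rw [← hf.natDegree_mul hg, hfg, hdeg]
    obtain ⟨b, hb⟩ := exists_pow_eq_pow_natDegree_of_dvd_X_pow_sub_C hf (Dvd.intro g hfg)
    rcases Nat.eq_zero_or_pos f.natDegree with hzero | hpos
    · exact .inl hzero
    · have hle : k ≤ f.natDegree := Nat.le_of_dvd hpos (h b _ hb)
      exact .inr (by lia)

end PowSubC

section DegreeOf

variable {σ R : Type*} [CommRing R] [IsDomain R] {i j : σ} {k : ℕ}

theorem dvd_of_pow_eq_pow_of_coprime_degreeOf {a b : MvPolynomial σ R} {n : ℕ} (hk : k ≠ 0)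
    (hcop : (a.degreeOf i).Coprime k) (hab : b ^ k = a ^ n) : k ∣ n := by
  rcases eq_or_ne a 0 with rfl | ha
  · simp_all
  have hb : b ≠ 0 := (pow_ne_zero_iff hk).1 (hab ▸ pow_ne_zero n ha)
  have hdeg : k * b.degreeOf i = n * a.degreeOf i := by
    rw [← degreeOf_pow_eq i b k hb, hab, degreeOf_pow_eq i a n ha]
  exact hcop.symm.dvd_of_dvd_mul_right (Dvd.intro _ hdeg)

theorem irreducible_X_pow_sub_C_of_coprime_degreeOf {a : MvPolynomial σ R} (hk : k ≠ 0)
    (hcop : (a.degreeOf i).Coprime k) : Irreducible (Polynomial.X ^ k - Polynomial.C a) :=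
  irreducible_X_pow_sub_C_of_forall_dvd hk fun _ _ ↦ dvd_of_pow_eq_pow_of_coprime_degreeOf hk hcop

theorem irreducible_C_add_C_mul_X_pow_of_coprime_degreeOf {a : MvPolynomial σ R} {u : R}
    (hk : k ≠ 0) (hu : IsUnit u) (hcop : (a.degreeOf i).Coprime k) :
    Irreducible (Polynomial.C a + Polynomial.C (C u) * Polynomial.X ^ k) := by
  obtain ⟨u, rfl⟩ := hu
  have hfactor : Polynomial.C a + Polynomial.C (C (u : R)) * Polynomial.X ^ k =
      Polynomial.C (C (u : R)) * (Polynomial.X ^ k - Polynomial.C (-(C (↑u⁻¹ : R) * a))) := by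
    have hinv : (C (u : R) * C (↑u⁻¹ : R) : MvPolynomial σ R) = 1 := by simp [← C_mul]
    rw [mul_sub, ← Polynomial.C_mul, mul_neg, ← mul_assoc, hinv, one_mul, Polynomial.C_neg]
    ring
  rw [hfactor, irreducible_isUnit_mul ((u.isUnit.map C).map Polynomial.C)]
  apply irreducible_X_pow_sub_C_of_coprime_degreeOf hk (i := i)
  rwa [degreeOf_neg, degreeOf_C_mul _ _ (mem_nonZeroDivisors_of_ne_zero u⁻¹.ne_zero)]

theorem irreducible_add_C_mul_X_pow_of_coprime_degreeOf {f : MvPolynomial σ R} {u : R}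
    (hk : k ≠ 0) (hu : IsUnit u) (hij : i ≠ j) (hj : j ∉ f.vars)
    (hcop : (f.degreeOf i).Coprime k) : Irreducible (f + C u * X j ^ k) := by
  classical
  obtain ⟨g, rfl⟩ : ∃ g : MvPolynomial {l // l ≠ j} R, rename Subtype.val g = f :=
    exists_rename_eq_of_vars_subset_range _ _ Subtype.val_injective (by simpa [Set.subset_def])
  rw [degreeOf_rename_of_injective Subtype.val_injective (⟨i, hij⟩ : {l // l ≠ j})] at hcop
  let e : MvPolynomial σ R ≃ₐ[R] Polynomial (MvPolynomial {l // l ≠ j} R) :=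
    (renameEquiv R (Equiv.optionSubtypeNe j).symm).trans (optionEquivLeft R _)
  have e_X : e (X j) = Polynomial.X := by simp [e, optionEquivLeft_X_none]
  have e_C (r : R) : e (C r) = Polynomial.C (C r) := by simp [e]
  have e_rename : e (rename Subtype.val g) = Polynomial.C g := by
    suffices e.toAlgHom.comp (rename Subtype.val) = Polynomial.CAlgHom from
      DFunLike.congr_fun this g
    ext l : 1
    simp [e, l.2]
  refine .of_map (f := e) ?_
  rw [map_add, map_mul, map_pow, e_X, e_C, e_rename]
  exact irreducible_C_add_C_mul_X_pow_of_coprime_degreeOf hk hu hcop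

end DegreeOf

theorem stmt_5_general {R : Type*} [CommRing R] [IsDomain R] {k h m : ℕ} (hk : k ≠ 0)
    (hcop : h.Coprime k) {s t : R} (hs : s ≠ 0) (ht : IsUnit t) :
    Irreducible (C s * (X 0 ^ h * X 1 ^ m) + C t * X 2 ^ k : MvPolynomial (Fin 3) R) := by
  have hdeg (i : Fin 3) : (C s * (X 0 ^ h * X 1 ^ m) : MvPolynomial (Fin 3) R).degreeOf i =
      (X 0 ^ h * X 1 ^ m : MvPolynomial (Fin 3) R).degreeOf i :=
    degreeOf_C_mul i s (mem_nonZeroDivisors_of_ne_zero hs)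
  have hdeg_zero : (C s * (X 0 ^ h * X 1 ^ m) : MvPolynomial (Fin 3) R).degreeOf 0 = h := by
    rw [hdeg, degreeOf_mul_X_pow_of_ne _ (by decide), degreeOf_X_self_pow]
  have hdeg_two : (C s * (X 0 ^ h * X 1 ^ m) : MvPolynomial (Fin 3) R).degreeOf 2 = 0 := by
    rw [hdeg, degreeOf_mul_X_pow_of_ne _ (by decide), degreeOf_X_pow_of_ne _ (by decide)]
  exact irreducible_add_C_mul_X_pow_of_coprime_degreeOf hk ht (i := 0) (by decide)
    (by rw [mem_vars_iff_degreeOf_ne_zero, not_not, hdeg_two]) (by rwa [hdeg_zero])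

/-- Irreducibility of the generic member of the binomial pencil: for `0 < h < k`
with `gcd(h,k) = 1` and nonzero `s, t ∈ ℂ`, the polynomial
`s·x^h y^(k-h) + t·z^k` is irreducible in `ℂ[x,y,z]`. -/
theorem stmt_5 (k h : ℕ) (hk : 2 ≤ k) (hh0 : 0 < h) (hhk : h < k)
    (hcop : Nat.gcd h k = 1) (s t : ℂ) (hs : s ≠ 0) (ht : t ≠ 0) :
    Irreducible
      (C s * (X 0 ^ h * X 1 ^ (k - h)) + C t * X 2 ^ k :
        MvPolynomial (Fin 3) ℂ) :=
  stmt_5_general (by lia) hcop hs ht.isUnit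
end

section
/- Let k ≥ 1 and let A, B ∈ ℂ[x,y,z] be homogeneous polynomials of degree k with no common non-unit divisor. Let C_1, …, C_n ∈ ℂ[x,y,z] be non-constant polynomials that are pairwise without common non-unit divisor, and let m_1, …, m_n ≥ 1 be integers such that for each i there exists (s_i, t_i) ∈ ℂ² ∖ {(0,0)} with C_i^{m_i} dividing s_i·A + t_i·B. Then Σ_{i=1}^n (m_i − 1) · deg C_i ≤ 2k − 2, where deg denotes total degree. -/
open MvPolynomial

/-!
All partial Jacobians `∂ᵢA · ∂ⱼB - ∂ⱼA · ∂ᵢB` are homogeneous of degree `2k - 2`. They are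
alternating and bilinear in `(A, B)`, so up to a nonzero scalar `A` or `B` may be replaced by any
member `s • A + t • B` of the pencil, and `c ^ (m - 1)` divides both partial derivatives of a
multiple of `c ^ m`. Hence `∏ Cᵢ ^ (mᵢ - 1)` divides every partial Jacobian. One of them is nonzero:
otherwise Euler's identity gives `A · ∂ⱼB = ∂ⱼA · B`, so by coprimality `A` divides its own partial
derivatives; these then vanish for degree reasons and `A = 0` by Euler again, likewise `B = 0`.
-/

section Derivation

lemma pow_sub_one_dvd_derivation_of_pow_dvd {R S : Type*} [CommSemiring R] [CommSemiring S]
    [Algebra R S] (D : Derivation R S S) {a c : S} {m : ℕ}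
    (h : c ^ m ∣ a) : c ^ (m - 1) ∣ D a := by
  obtain ⟨g, rfl⟩ := h
  rw [D.leibniz, D.leibniz_pow, smul_eq_mul, smul_eq_mul, smul_eq_mul]
  exact dvd_add ((pow_dvd_pow c (Nat.sub_le m 1)).mul_right _)
    ((dvd_nsmul_of_dvd m (dvd_mul_right _ _)).mul_left g)

variable {R S : Type*} [CommRing R] [CommRing S] [Algebra R S]

/-- The Jacobian determinant of `a` and `b` along the derivations `D` and `E`, that is, the
value of `da ∧ db` on the pair `(D, E)`. For a pencil `[a : b]` of plane curves, the divisorial part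
of the zeros of the form `da ∧ db` is the ramification divisor. -/
def jacobian (D E : Derivation R S S) (a b : S) : S :=
  D a * E b - E a * D b

variable (D E : Derivation R S S)

lemma jacobian_swap (a b : S) : jacobian D E b a = -jacobian D E a b := by
  simp only [jacobian]
  ring

lemma jacobian_smul_add_smul_left (s t : R) (a b : S) :
    jacobian D E (s • a + t • b) b = s • jacobian D E a b := by
  simp only [jacobian, map_add, D.map_smul, E.map_smul]
  simp only [Algebra.smul_def]
  ring

lemma pow_sub_one_dvd_jacobian_of_pow_dvd_left {a c : S} {m : ℕ} (h : c ^ m ∣ a) (b : S) :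
    c ^ (m - 1) ∣ jacobian D E a b :=
  dvd_sub ((pow_sub_one_dvd_derivation_of_pow_dvd D h).mul_right _)
    ((pow_sub_one_dvd_derivation_of_pow_dvd E h).mul_right _)

end Derivation

section Pencil

variable {K S : Type*} [Field K] [CommRing S] [Algebra K S] (D E : Derivation K S S)

lemma pow_sub_one_dvd_jacobian_of_left_coeff_ne_zero {a b c : S} {m : ℕ} {s t : K} (hs : s ≠ 0)
    (h : c ^ m ∣ s • a + t • b) : c ^ (m - 1) ∣ jacobian D E a b := by
  rw [← inv_smul_smul₀ hs (jacobian D E a b), ← jacobian_smul_add_smul_left D E s t]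
  exact dvd_smul_of_dvd _ (pow_sub_one_dvd_jacobian_of_pow_dvd_left D E h b)

lemma pow_sub_one_dvd_jacobian_of_pow_dvd_smul_add_smul {a b c : S} {m : ℕ} {s t : K}
    (hst : (s, t) ≠ (0, 0)) (h : c ^ m ∣ s • a + t • b) :
    c ^ (m - 1) ∣ jacobian D E a b := by
  by_cases hs : s = 0
  · have ht : t ≠ 0 := fun ht => hst (Prod.ext hs ht)
    rw [jacobian_swap, dvd_neg]
    exact pow_sub_one_dvd_jacobian_of_left_coeff_ne_zero D E ht (add_comm (s • a) (t • b) ▸ h)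
  · exact pow_sub_one_dvd_jacobian_of_left_coeff_ne_zero D E hs h

end Pencil

section TotalDegree

variable {R σ : Type*} [CommSemiring R] [NoZeroDivisors R] [Nontrivial R]

lemma totalDegree_prod_of_isDomain {ι : Type*} (s : Finset ι) (f : ι → MvPolynomial σ R)
    (hf : ∀ i ∈ s, f i ≠ 0) : (∏ i ∈ s, f i).totalDegree = ∑ i ∈ s, (f i).totalDegree := by
  induction s using Finset.cons_induction with
  | empty => simp
  | cons a s ha ih =>
    rw [Finset.forall_mem_cons] at hf
    rw [Finset.prod_cons, Finset.sum_cons,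
      totalDegree_mul_of_isDomain hf.1 (Finset.prod_ne_zero_iff.mpr hf.2), ih hf.2]

lemma totalDegree_pow_of_isDomain (p : MvPolynomial σ R) (e : ℕ) :
    (p ^ e).totalDegree = e * p.totalDegree := by
  rcases eq_or_ne p 0 with rfl | hp
  · rcases e with _ | e <;> simp
  · simpa using totalDegree_prod_of_isDomain (Finset.range e) (fun _ => p) fun _ _ => hp

end TotalDegree

section Euler

lemma eq_zero_of_nsmul_eq_zero_of_cast_ne_zero {R M : Type*} [Semiring R]
    [IsDomain R] [AddCommMonoid M] [Module R M] [Module.IsTorsionFree R M] {k : ℕ} {x : M}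
    (hk : (k : R) ≠ 0) (h : k • x = 0) : x = 0 := by
  rw [← Nat.cast_smul_eq_nsmul R] at h
  exact (smul_eq_zero.mp h).resolve_left hk

variable {R σ : Type*} {k : ℕ}

lemma sum_X_mul_pderiv_of_vars_subset [CommSemiring R] {A : MvPolynomial σ R}
    (hA : A.IsHomogeneous k) {s : Finset σ} (hs : A.vars ⊆ s) :
    ∑ i ∈ s, X i * pderiv i A = k • A := by
  have sum_exponents {d : σ →₀ ℕ} (hd : d ∈ A.support) : ∑ i ∈ s, d i = k := by
    have hds : d.support ⊆ s := (support_subset_vars_of_mem_support hd).trans hs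
    rw [hA.degree_eq_sum_deg_support hd]
    exact (Finset.sum_subset hds fun i _ hi => Finsupp.notMem_support_iff.mp hi).symm
  calc ∑ i ∈ s, X i * pderiv i A
      = ∑ i ∈ s, ∑ d ∈ A.support, d i • monomial d (coeff d A) := by
        refine Finset.sum_congr rfl fun i _ => ?_
        conv_lhs => rw [A.as_sum, map_sum, Finset.mul_sum]
        simp only [X_mul_pderiv_monomial]
    _ = ∑ d ∈ A.support, k • monomial d (coeff d A) := by
        rw [Finset.sum_comm]
        refine Finset.sum_congr rfl fun d hd => ?_
        rw [← Finset.sum_smul, sum_exponents hd]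
    _ = k • A := by rw [← Finset.smul_sum, ← A.as_sum]

lemma eq_zero_of_forall_dvd_pderiv [CommSemiring R] [IsDomain R] {A : MvPolynomial σ R}
    (hk : (k : R) ≠ 0) (hA : A.IsHomogeneous k) (h : ∀ j, A ∣ pderiv j A) : A = 0 := by
  by_contra hA0
  have hk0 : k ≠ 0 := fun hk0 => hk (by rw [hk0, Nat.cast_zero])
  have pderiv_eq_zero (j : σ) : pderiv j A = 0 := by
    by_contra hj
    have hdvd : A.totalDegree ≤ (pderiv j A).totalDegree :=
      totalDegree_le_of_dvd_of_isDomain (h j) hj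
    have hpderiv : (pderiv j A).totalDegree ≤ k - 1 := hA.pderiv.totalDegree_le
    rw [hA.totalDegree hA0] at hdvd
    omega
  apply hA0
  apply eq_zero_of_nsmul_eq_zero_of_cast_ne_zero hk
  rw [← sum_X_mul_pderiv_of_vars_subset hA subset_rfl]
  exact Finset.sum_eq_zero fun i _ => by rw [pderiv_eq_zero, mul_zero]

end Euler

section PartialJacobian

variable {R σ : Type*} [CommRing R] {A B : MvPolynomial σ R} {k : ℕ}

lemma isHomogeneous_jacobian {l : ℕ} (hA : A.IsHomogeneous k) (hB : B.IsHomogeneous l) (i j : σ) :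
    (jacobian (pderiv i) (pderiv j) A B).IsHomogeneous ((k - 1) + (l - 1)) :=
  (hA.pderiv.mul hB.pderiv).sub (hA.pderiv.mul hB.pderiv)

lemma sum_X_mul_jacobian (hA : A.IsHomogeneous k) (hB : B.IsHomogeneous k) {s : Finset σ}
    (hAs : A.vars ⊆ s) (hBs : B.vars ⊆ s) (j : σ) :
    ∑ i ∈ s, X i * jacobian (pderiv i) (pderiv j) A B =
      k • (A * pderiv j B - pderiv j A * B) := by
  rw [smul_sub, ← smul_mul_assoc, ← mul_smul_comm, ← sum_X_mul_pderiv_of_vars_subset hA hAs,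
    ← sum_X_mul_pderiv_of_vars_subset hB hBs, Finset.sum_mul, Finset.mul_sum,
    ← Finset.sum_sub_distrib]
  refine Finset.sum_congr rfl fun i _ => ?_
  simp only [jacobian]
  ring

lemma exists_jacobian_ne_zero_of_isRelPrime [IsDomain R] [UniqueFactorizationMonoid R]
    (hk : (k : R) ≠ 0) (hA : A.IsHomogeneous k) (hB : B.IsHomogeneous k)
    (hAB : IsRelPrime A B) :
    ∃ i j, jacobian (pderiv i) (pderiv j) A B ≠ 0 := by
  classical
  by_contra! hJ
  have cross_mul (j : σ) : A * pderiv j B = pderiv j A * B := by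
    apply sub_eq_zero.mp
    apply eq_zero_of_nsmul_eq_zero_of_cast_ne_zero hk
    rw [← sum_X_mul_jacobian hA hB Finset.subset_union_left Finset.subset_union_right]
    exact Finset.sum_eq_zero fun i _ => by rw [hJ, mul_zero]
  have hA0 : A = 0 := eq_zero_of_forall_dvd_pderiv hk hA fun j =>
    hAB.dvd_of_dvd_mul_right (Dvd.intro _ (cross_mul j))
  have hB0 : B = 0 := eq_zero_of_forall_dvd_pderiv hk hB fun j =>
    hAB.symm.dvd_of_dvd_mul_left (Dvd.intro_left _ (cross_mul j).symm)
  subst hA0 hB0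
  exact not_isUnit_zero (hAB dvd_rfl dvd_rfl)

end PartialJacobian

theorem stmt_9_general {K σ ι : Type*} [Field K] [Fintype ι] {k : ℕ} (hk : (k : K) ≠ 0)
    {A B : MvPolynomial σ K} (hA : A.IsHomogeneous k) (hB : B.IsHomogeneous k)
    (hAB : IsRelPrime A B) {c : ι → MvPolynomial σ K}
    (hc : Pairwise fun i j => IsRelPrime (c i) (c j)) {m : ι → ℕ}
    (hdiv : ∀ i, ∃ s t : K, (s, t) ≠ (0, 0) ∧ c i ^ m i ∣ C s * A + C t * B) :
    ∑ i, (m i - 1) * (c i).totalDegree ≤ 2 * k - 2 := by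
  obtain ⟨p, q, hJ⟩ := exists_jacobian_ne_zero_of_isRelPrime hk hA hB hAB
  have prod_dvd : ∏ i, c i ^ (m i - 1) ∣ jacobian (pderiv p) (pderiv q) A B := by
    refine Fintype.prod_dvd_of_isRelPrime (fun i j hij => (hc hij).pow) fun i => ?_
    obtain ⟨s, t, hst, h⟩ := hdiv i
    rw [C_mul', C_mul'] at h
    exact pow_sub_one_dvd_jacobian_of_pow_dvd_smul_add_smul _ _ hst h
  have factor_ne_zero : ∀ i ∈ Finset.univ, c i ^ (m i - 1) ≠ 0 :=
    Finset.prod_ne_zero_iff.mp (ne_zero_of_dvd_ne_zero hJ prod_dvd)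
  calc ∑ i, (m i - 1) * (c i).totalDegree
      = (∏ i, c i ^ (m i - 1)).totalDegree := by
        simp only [totalDegree_prod_of_isDomain _ _ factor_ne_zero, totalDegree_pow_of_isDomain]
    _ ≤ (jacobian (pderiv p) (pderiv q) A B).totalDegree :=
        totalDegree_le_of_dvd_of_isDomain prod_dvd hJ
    _ ≤ (k - 1) + (k - 1) := (isHomogeneous_jacobian hA hB p q).totalDegree_le
    _ = 2 * k - 2 := by omega

/-- Lemma 1, inequality, in divisor-free form: for a pencil `π = [A : B]` of plane
curves of degree `k` without fixed component, the ramification divisor has degree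
at most `2k - 2`: if `C_i^(m_i)` divides some member `s_i·A + t_i·B`, with the `C_i`
non-constant and pairwise coprime, then `Σ (m_i - 1)·deg C_i ≤ 2k - 2`. -/
theorem stmt_9 (k : ℕ) (hk : 1 ≤ k) (A B : MvPolynomial (Fin 3) ℂ)
    (hA : A.IsHomogeneous k) (hB : B.IsHomogeneous k) (hAB : IsRelPrime A B)
    (n : ℕ) (Cc : Fin n → MvPolynomial (Fin 3) ℂ)
    (hCdeg : ∀ i, 0 < (Cc i).totalDegree)
    (hCcop : ∀ i j, i ≠ j → IsRelPrime (Cc i) (Cc j))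
    (m : Fin n → ℕ) (hm : ∀ i, 1 ≤ m i)
    (hdiv : ∀ i, ∃ s t : ℂ, (s, t) ≠ (0, 0) ∧
      Cc i ^ m i ∣ (C s * A + C t * B)) :
    ∑ i : Fin n, (m i - 1) * (Cc i).totalDegree ≤ 2 * k - 2 :=
  stmt_9_general (Nat.cast_ne_zero.mpr (Nat.one_le_iff_ne_zero.mp hk)) hA hB hAB
    (fun i j hij => hCcop i j hij) hdiv
end

section
/- Let k ≥ 2 and let A, B ∈ ℂ[x,y,z] be homogeneous polynomials of degree k with no common non-unit divisor, and assume there are infinitely many pairwise non-proportional pairs (s,t) ∈ ℂ² ∖ {(0,0)} for which s·A + t·B is irreducible in ℂ[x,y,z]. Let C_1, …, C_n ∈ ℂ[x,y,z] be non-constant polynomials that are pairwise without common non-unit divisor, and let m_1, …, m_n ≥ 1 be integers such that for each i there exists (s_i, t_i) ∈ ℂ² ∖ {(0,0)} with C_i^{m_i} dividing s_i·A + t_i·B. Then Σ_{i=1}^n (m_i − 1) · deg C_i ≤ 2k − 3, where deg denotes total degree. -/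
open MvPolynomial

/-!
Every curve `D` with `D ^ (e + 1)` dividing a member of the pencil spanned by `A` and `B` satisfies
that `D ^ e` divides all the `2 × 2` minors of the Jacobian matrix of `(A, B)`. These minors are
forms of degree `2k - 2` and do not all vanish, so the ramification divisor has degree at most
`2k - 2`. If the degree were `2k - 2`, the minors would be proportional to constants, and Cramer's
rule would express the gradient of every member through two of its partial derivatives with
constant coefficients. By Euler's identity all members would then be binary forms in the same two
linear forms, hence, over an algebraically closed field, products of linear forms: no member would
be irreducible.
-/

section Degree

variable {R σ : Type*} [CommSemiring R]

lemma totalDegree_pow_eq [NoZeroDivisors R] (f : MvPolynomial σ R) (n : ℕ) :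
    (f ^ n).totalDegree = n * f.totalDegree := by
  rcases eq_or_ne f 0 with rfl | hf
  · cases n <;> simp
  induction n with
  | zero => simp
  | succ n ih =>
    rw [pow_succ, totalDegree_mul_of_isDomain (pow_ne_zero n hf) hf, ih, Nat.succ_mul]

lemma totalDegree_prod_eq [NoZeroDivisors R] [Nontrivial R] {ι : Type*} (s : Finset ι)
    {f : ι → MvPolynomial σ R} (hf : ∀ i ∈ s, f i ≠ 0) :
    (∏ i ∈ s, f i).totalDegree = ∑ i ∈ s, (f i).totalDegree := by
  induction s using Finset.cons_induction with
  | empty => simp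
  | cons a s ha ih =>
    rw [Finset.forall_mem_cons] at hf
    rw [Finset.prod_cons, Finset.sum_cons,
      totalDegree_mul_of_isDomain hf.1 (Finset.prod_ne_zero_iff.2 hf.2), ih hf.2]

lemma not_isUnit_of_isHomogeneous [Nontrivial R] {F : MvPolynomial σ R} {k : ℕ}
    (hF : F.IsHomogeneous k) (hk : k ≠ 0) : ¬ IsUnit F := fun hu => by
  have hF0 : constantCoeff F = 0 := hF.coeff_eq_zero (by simpa using hk.symm)
  exact not_isUnit_zero (hF0 ▸ hu.map constantCoeff)

lemma exists_eq_C_mul_of_dvd_of_totalDegree_le [NoZeroDivisors R] {D F : MvPolynomial σ R}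
    (h : D ∣ F) (hdeg : F.totalDegree ≤ D.totalDegree) : ∃ c : R, F = C c * D := by
  obtain ⟨Q, rfl⟩ := h
  rcases eq_or_ne (D * Q) 0 with h0 | h0
  · exact ⟨0, by simp [h0]⟩
  rw [totalDegree_mul_of_isDomain (left_ne_zero_of_mul h0) (right_ne_zero_of_mul h0)] at hdeg
  have hQ : Q.totalDegree = 0 := by lia
  exact ⟨coeff 0 Q, by rw [mul_comm, ← totalDegree_eq_zero_iff_eq_C.1 hQ]⟩

end Degree

section LinearForms

lemma pderiv_pderiv_comm {R σ : Type*} [CommSemiring R] (a b : σ) (F : MvPolynomial σ R) :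
    pderiv a (pderiv b F) = pderiv b (pderiv a F) := by
  classical
  induction F using MvPolynomial.induction_on with
  | C r => simp only [pderiv_C, map_zero]
  | add f g hf hg => simp only [map_add, hf, hg]
  | mul_X f c hf =>
    have hX (i j : σ) : pderiv i (pderiv j (X c : MvPolynomial σ R)) = 0 := by
      rw [pderiv_X]
      rcases eq_or_ne j c with rfl | hjc <;> simp [*]
    simp only [pderiv_mul, map_add, hX, hf, mul_zero, add_zero]
    ring

lemma nsmul_eq_sum_linear_mul_pderiv {R σ τ : Type*} [CommSemiring R] [Fintype σ] [Fintype τ]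
    {v : τ → σ} {M : τ → σ → R} {n : ℕ} {F : MvPolynomial σ R} (hF : F.IsHomogeneous n)
    (hgrad : ∀ c, pderiv c F = ∑ i, C (M i c) * pderiv (v i) F) :
    n • F = ∑ i, (∑ c, C (M i c) * X c) * pderiv (v i) F := calc
  n • F = ∑ c, X c * pderiv c F := hF.sum_X_mul_pderiv.symm
  _ = ∑ c, ∑ i, C (M i c) * X c * pderiv (v i) F := by
    refine Finset.sum_congr rfl fun c _ => ?_
    rw [hgrad c, Finset.mul_sum]
    exact Finset.sum_congr rfl fun i _ => by ring
  _ = ∑ i, (∑ c, C (M i c) * X c) * pderiv (v i) F := by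
    rw [Finset.sum_comm]
    exact Finset.sum_congr rfl fun i _ => (Finset.sum_mul ..).symm

lemma exists_eq_aeval_of_pderiv_eq_sum {K σ τ : Type*} [Field K] [CharZero K] [Fintype σ]
    [Fintype τ] {v : τ → σ} {M : τ → σ → K} {k : ℕ} {F : MvPolynomial σ K}
    (hF : F.IsHomogeneous k)
    (hgrad : ∀ c, pderiv c F = ∑ i, C (M i c) * pderiv (v i) F) :
    ∃ G : MvPolynomial τ K, G.IsHomogeneous k ∧
      F = aeval (fun i => ∑ c, C (M i c) * X c) G := by
  induction k generalizing F with
  | zero =>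
    have hF0 := totalDegree_eq_zero_iff_eq_C.1 ((totalDegree_zero_iff_isHomogeneous σ).2 hF)
    exact ⟨C (coeff 0 F), isHomogeneous_C τ _, by rw [aeval_C, algebraMap_eq, ← hF0]⟩
  | succ k ih =>
    have hgrad_pderiv (a c : σ) :
        pderiv c (pderiv a F) = ∑ i, C (M i c) * pderiv (v i) (pderiv a F) := by
      rw [pderiv_pderiv_comm, hgrad c, map_sum]
      exact Finset.sum_congr rfl fun i _ => by rw [pderiv_C_mul, pderiv_pderiv_comm]
    choose G hG hGF using fun i => ih hF.pderiv (hgrad_pderiv (v i))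
    refine ⟨C (k + 1 : K)⁻¹ * ∑ i, X i * G i,
      (IsHomogeneous.sum _ _ _ fun i _ => ?_).C_mul _, ?_⟩
    · exact add_comm k 1 ▸ (isHomogeneous_X K i).mul (hG i)
    calc F = C (k + 1 : K)⁻¹ * ((k + 1) • F) := by
          rw [← Nat.cast_smul_eq_nsmul K, Nat.cast_succ, smul_eq_C_mul, ← mul_assoc, ← C_mul,
            inv_mul_cancel₀ k.cast_add_one_ne_zero, C_1, one_mul]
      _ = C (k + 1 : K)⁻¹ * ∑ i, (∑ c, C (M i c) * X c) * pderiv (v i) F := by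
          rw [nsmul_eq_sum_linear_mul_pderiv hF hgrad]
      _ = aeval (fun i => ∑ c, C (M i c) * X c) (C (k + 1 : K)⁻¹ * ∑ i, X i * G i) := by
          simp only [map_mul, map_sum, aeval_X, aeval_C, algebraMap_eq, ← hGF]

lemma exists_linear_mul_of_isHomogeneous_fin_two {K : Type*} [Field K] [IsAlgClosed K] {k : ℕ}
    {G : MvPolynomial (Fin 2) K} (hG : G.IsHomogeneous (k + 1)) :
    ∃ L H : MvPolynomial (Fin 2) K, L.IsHomogeneous 1 ∧ H.IsHomogeneous k ∧ G = L * H := by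
  set p : Polynomial K := aeval ![Polynomial.X, 1] G
  have hpG : p.homogenize (k + 1) = G := Polynomial.homogenize_eq_of_isHomogeneous hG rfl
  have hp_deg : p.natDegree ≤ k + 1 := by
    simpa using aeval_natDegree_le G hG.totalDegree_le ![Polynomial.X, 1] (n := 1)
      (by simp [Fin.forall_fin_two])
  by_cases hp0 : p.degree = 0
  · rw [Polynomial.eq_C_of_degree_eq_zero hp0, Polynomial.homogenize_C] at hpG
    exact ⟨X 1, C (p.coeff 0) * X 1 ^ k, isHomogeneous_X K 1,
      isHomogeneous_C_mul_X_pow _ 1 k, by rw [← hpG]; ring⟩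
  · obtain ⟨r, hr⟩ := IsAlgClosed.exists_root p hp0
    set q := p /ₘ (Polynomial.X - Polynomial.C r)
    have hpq : p = (Polynomial.X - Polynomial.C r) * q :=
      (Polynomial.mul_divByMonic_eq_iff_isRoot.2 hr).symm
    have hq : q.natDegree ≤ k := by
      rw [Polynomial.natDegree_divByMonic p (Polynomial.monic_X_sub_C r),
        Polynomial.natDegree_X_sub_C]
      exact Nat.sub_le_of_le_add hp_deg
    refine ⟨(Polynomial.X - Polynomial.C r).homogenize 1, q.homogenize k,
      Polynomial.isHomogeneous_homogenize _, Polynomial.isHomogeneous_homogenize _, ?_⟩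
    rw [← hpG, hpq, add_comm k,
      Polynomial.homogenize_mul _ _ (Polynomial.natDegree_X_sub_C_le r) hq]

lemma not_irreducible_aeval_of_isHomogeneous {K σ : Type*} [Field K] [IsAlgClosed K] {k : ℕ}
    (hk : 2 ≤ k) {G : MvPolynomial (Fin 2) K} (hG : G.IsHomogeneous k)
    {ℓ : Fin 2 → MvPolynomial σ K} (hℓ : ∀ i, (ℓ i).IsHomogeneous 1) :
    ¬ Irreducible (aeval ℓ G) := fun hirr => by
  obtain ⟨j, rfl⟩ := Nat.exists_eq_add_of_le' (one_le_two.trans hk)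
  obtain ⟨L, H, hL, hH, rfl⟩ := exists_linear_mul_of_isHomogeneous_fin_two hG
  rcases hirr.isUnit_or_isUnit (map_mul (aeval ℓ) L H) with hu | hu
  · exact not_isUnit_of_isHomogeneous (hL.aeval ℓ hℓ) (by lia) hu
  · exact not_isUnit_of_isHomogeneous (hH.aeval ℓ hℓ) (by lia) hu

end LinearForms

section Jacobian

lemma pow_dvd_derivation_of_pow_succ_dvd {R S : Type*} [CommSemiring R] [CommSemiring S]
    [Algebra R S] (δ : Derivation R S S) {f g : S} {e : ℕ} (h : f ^ (e + 1) ∣ g) :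
    f ^ e ∣ δ g := by
  obtain ⟨q, rfl⟩ := h
  rw [δ.leibniz, δ.leibniz_pow, Nat.add_sub_cancel]
  simp only [smul_eq_mul, nsmul_eq_mul]
  exact ⟨f * δ q + q * ((e + 1 : ℕ) * δ f), by ring⟩

/-- The `2 × 2` minor with columns `a`, `b` of the Jacobian matrix of the pair `(A, B)`, that is,
the coefficient of `dxₐ ∧ dx_b` in `dA ∧ dB`. The ramification divisor of the pencil spanned by `A`
and `B` divides all these minors. -/
noncomputable def jacobianMinor {R σ : Type*} [CommRing R] (A B : MvPolynomial σ R) (a b : σ) :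
    MvPolynomial σ R :=
  pderiv a A * pderiv b B - pderiv b A * pderiv a B

section CommRing

variable {R σ : Type*} [CommRing R] {A B : MvPolynomial σ R}

lemma isHomogeneous_jacobianMinor {j k : ℕ} (hA : A.IsHomogeneous j) (hB : B.IsHomogeneous k)
    (a b : σ) : (jacobianMinor A B a b).IsHomogeneous ((j - 1) + (k - 1)) :=
  (hA.pderiv.mul hB.pderiv).sub (hA.pderiv.mul hB.pderiv)

lemma jacobianMinor_linearCombination_left (s t : R) (a b : σ) :
    jacobianMinor (C s * A + C t * B) B a b = C s * jacobianMinor A B a b := by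
  simp only [jacobianMinor, map_add, pderiv_C_mul]
  ring

lemma jacobianMinor_linearCombination_right (s t : R) (a b : σ) :
    jacobianMinor A (C s * A + C t * B) a b = C t * jacobianMinor A B a b := by
  simp only [jacobianMinor, map_add, pderiv_C_mul]
  ring

-- Cramer's rule: the gradient of a member of the pencil, solved from its components `p` and `q`.
lemma jacobianMinor_mul_pderiv_linearCombination (s t : R) (p q c : σ) :
    jacobianMinor A B p q * pderiv c (C s * A + C t * B) =
      jacobianMinor A B c q * pderiv p (C s * A + C t * B) +
        jacobianMinor A B p c * pderiv q (C s * A + C t * B) := by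
  simp only [jacobianMinor, map_add, pderiv_C_mul]
  ring

end CommRing

section Field

variable {K σ : Type*} [Field K] {A B : MvPolynomial σ K}

lemma pow_dvd_jacobianMinor {D : MvPolynomial σ K} {e : ℕ} {s t : K} (hst : (s, t) ≠ (0, 0))
    (h : D ^ (e + 1) ∣ C s * A + C t * B) (a b : σ) : D ^ e ∣ jacobianMinor A B a b := by
  have hgrad (c : σ) : D ^ e ∣ pderiv c (C s * A + C t * B) :=
    pow_dvd_derivation_of_pow_succ_dvd (pderiv c) h
  have hs : D ^ e ∣ C s * jacobianMinor A B a b := by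
    rw [← jacobianMinor_linearCombination_left s t]
    exact dvd_sub ((hgrad a).mul_right _) ((hgrad b).mul_right _)
  have ht : D ^ e ∣ C t * jacobianMinor A B a b := by
    rw [← jacobianMinor_linearCombination_right s t]
    exact dvd_sub ((hgrad b).mul_left _) ((hgrad a).mul_left _)
  have hC {r : K} (hr : r ≠ 0) : IsUnit (C r : MvPolynomial σ K) := hr.isUnit.map C
  rcases eq_or_ne s 0 with rfl | hs0
  · exact (hC (by simpa using hst)).dvd_mul_left.1 ht
  · exact (hC hs0).dvd_mul_left.1 hs

lemma exists_jacobianMinor_ne_zero [CharZero K] [Finite σ] {k : ℕ} (hk : k ≠ 0)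
    (hA : A.IsHomogeneous k) (hB : B.IsHomogeneous k) (hAB : IsRelPrime A B) :
    ∃ a b, jacobianMinor A B a b ≠ 0 := by
  have := Fintype.ofFinite σ
  by_contra! hJ
  have hA0 : A ≠ 0 := by
    rintro rfl
    exact not_isUnit_of_isHomogeneous hB hk (isRelPrime_zero_left.1 hAB)
  have hk0 : (k : MvPolynomial σ K) ≠ 0 := by exact_mod_cast hk
  have eulerA : ∑ a, X a * pderiv a A = k * A := by rw [hA.sum_X_mul_pderiv, nsmul_eq_mul]
  have eulerB : ∑ a, X a * pderiv a B = k * B := by rw [hB.sum_X_mul_pderiv, nsmul_eq_mul]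
  have hcross (b : σ) : A * pderiv b B = pderiv b A * B := by
    have hsum : ∑ a, X a * jacobianMinor A B a b = k * (A * pderiv b B - pderiv b A * B) := calc
      _ = (∑ a, X a * pderiv a A) * pderiv b B - pderiv b A * ∑ a, X a * pderiv a B := by
        rw [Finset.sum_mul, Finset.mul_sum, ← Finset.sum_sub_distrib]
        exact Finset.sum_congr rfl fun a _ => by rw [jacobianMinor]; ring
      _ = _ := by rw [eulerA, eulerB]; ring
    simp only [hJ, mul_zero, Finset.sum_const_zero] at hsum
    exact sub_eq_zero.1 ((mul_eq_zero.1 hsum.symm).resolve_left hk0)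
  have hpderiv (b : σ) : pderiv b A = 0 := by
    by_contra hne
    have hdvd : A ∣ pderiv b A := hAB.dvd_of_dvd_mul_right ⟨_, (hcross b).symm⟩
    have hle := totalDegree_le_of_dvd_of_isDomain hdvd hne
    rw [hA.totalDegree hA0, hA.pderiv.totalDegree hne] at hle
    lia
  simp only [hpderiv, mul_zero, Finset.sum_const_zero] at eulerA
  exact mul_ne_zero hk0 hA0 eulerA.symm

end Field

end Jacobian

section Pencil

variable {K σ : Type*} [Field K] [IsAlgClosed K] [CharZero K] [Finite σ]
  {A B : MvPolynomial σ K} {k : ℕ}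

lemma not_irreducible_of_jacobianMinor_eq_C_mul (hk : 2 ≤ k) (hA : A.IsHomogeneous k)
    (hB : B.IsHomogeneous k) {R : MvPolynomial σ K} {c : σ → σ → K}
    (hJ : ∀ a b, jacobianMinor A B a b = C (c a b) * R) {p q : σ}
    (hpq : jacobianMinor A B p q ≠ 0) (s t : K) : ¬ Irreducible (C s * A + C t * B) := by
  have := Fintype.ofFinite σ
  set F := C s * A + C t * B with hF_def
  have hF : F.IsHomogeneous k := (hA.C_mul s).add (hB.C_mul t)
  rw [hJ] at hpq
  have hR : R ≠ 0 := right_ne_zero_of_mul hpq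
  have hc : c p q ≠ 0 := fun h => hpq (by simp [h])
  have hcramer (a : σ) :
      C (c p q) * pderiv a F = C (c a q) * pderiv p F + C (c p a) * pderiv q F := by
    have h := jacobianMinor_mul_pderiv_linearCombination (A := A) (B := B) s t p q a
    simp only [hJ, ← hF_def] at h
    exact mul_left_cancel₀ hR (by linear_combination h)
  have hgrad (a : σ) : pderiv a F =
      ∑ i, C (![fun b => c b q / c p q, fun b => c p b / c p q] i a) * pderiv (![p, q] i) F := by
    have hCc : C (c p q) ≠ (0 : MvPolynomial σ K) := C_ne_zero.2 hc
    apply mul_left_cancel₀ hCc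
    rw [hcramer, Fin.sum_univ_two, mul_add, ← mul_assoc, ← mul_assoc, ← C_mul, ← C_mul]
    simp [mul_div_cancel₀ _ hc]
  obtain ⟨G, hG, hFG⟩ := exists_eq_aeval_of_pderiv_eq_sum hF hgrad
  rw [hFG]
  exact not_irreducible_aeval_of_isHomogeneous hk hG fun i =>
    IsHomogeneous.sum _ _ _ fun b _ => isHomogeneous_C_mul_X _ b

lemma totalDegree_le_of_forall_dvd_jacobianMinor (hk : 2 ≤ k) (hA : A.IsHomogeneous k)
    (hB : B.IsHomogeneous k) (hAB : IsRelPrime A B) {s t : K}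
    (hirr : Irreducible (C s * A + C t * B)) {R : MvPolynomial σ K}
    (hR : ∀ a b, R ∣ jacobianMinor A B a b) : R.totalDegree ≤ 2 * k - 3 := by
  by_contra! hdeg
  have hJ (a b : σ) : ∃ c : K, jacobianMinor A B a b = C c * R := by
    refine exists_eq_C_mul_of_dvd_of_totalDegree_le (hR a b) ?_
    have := (isHomogeneous_jacobianMinor hA hB a b).totalDegree_le
    lia
  choose c hc using hJ
  obtain ⟨p, q, hpq⟩ := exists_jacobianMinor_ne_zero (by lia) hA hB hAB
  exact not_irreducible_of_jacobianMinor_eq_C_mul hk hA hB hc hpq s t hirr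

/-- Here `e i` is the ramification order `mᵢ - 1` along the `i`-th curve. -/
theorem stmt_10_general (hk : 2 ≤ k) (hA : A.IsHomogeneous k) (hB : B.IsHomogeneous k)
    (hAB : IsRelPrime A B) (hirr : ∃ s t : K, Irreducible (C s * A + C t * B))
    {ι : Type*} [Fintype ι] {D : ι → MvPolynomial σ K}
    (hD : Pairwise fun i j => IsRelPrime (D i) (D j)) {e : ι → ℕ}
    (hdiv : ∀ i, ∃ s t : K, (s, t) ≠ (0, 0) ∧ D i ^ (e i + 1) ∣ C s * A + C t * B) :
    ∑ i, e i * (D i).totalDegree ≤ 2 * k - 3 := by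
  obtain ⟨s, t, hst⟩ := hirr
  have hdvd (a b : σ) : ∏ i, D i ^ e i ∣ jacobianMinor A B a b := by
    refine Fintype.prod_dvd_of_isRelPrime (fun i j hij => (hD hij).pow) fun i => ?_
    obtain ⟨s, t, hst, h⟩ := hdiv i
    exact pow_dvd_jacobianMinor hst h a b
  obtain ⟨a, b, hJ⟩ := exists_jacobianMinor_ne_zero (by lia) hA hB hAB
  have hne : ∏ i, D i ^ e i ≠ 0 := ne_zero_of_dvd_ne_zero hJ (hdvd a b)
  calc ∑ i, e i * (D i).totalDegree = (∏ i, D i ^ e i).totalDegree := by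
        rw [totalDegree_prod_eq _ (Finset.prod_ne_zero_iff.1 hne)]
        simp only [totalDegree_pow_eq]
    _ ≤ 2 * k - 3 := totalDegree_le_of_forall_dvd_jacobianMinor hk hA hB hAB hst hdvd

end Pencil

/-- Lemma 1 with its equality case, in divisor-free form: for an *irreducible*
pencil `π = [A : B]` of plane curves of degree `k ≥ 2` (infinitely many pairwise
non-proportional members `s·A + t·B` are irreducible), the ramification divisor
has degree at most `2k - 3`: if `C_i^(m_i)` divides some member `s_i·A + t_i·B`,
with the `C_i` non-constant and pairwise coprime, then
`Σ (m_i - 1)·deg C_i ≤ 2k - 3`. -/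
theorem stmt_10 (k : ℕ) (hk : 2 ≤ k) (A B : MvPolynomial (Fin 3) ℂ)
    (hA : A.IsHomogeneous k) (hB : B.IsHomogeneous k) (hAB : IsRelPrime A B)
    (hirr : ∃ S : Set (ℂ × ℂ), S.Infinite ∧
      (∀ p ∈ S, p ≠ (0, 0) ∧ Irreducible (C p.1 * A + C p.2 * B)) ∧
      (∀ p ∈ S, ∀ q ∈ S, p ≠ q → p.1 * q.2 ≠ p.2 * q.1))
    (n : ℕ) (Cc : Fin n → MvPolynomial (Fin 3) ℂ)
    (hCdeg : ∀ i, 0 < (Cc i).totalDegree)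
    (hCcop : ∀ i j, i ≠ j → IsRelPrime (Cc i) (Cc j))
    (m : Fin n → ℕ) (hm : ∀ i, 1 ≤ m i)
    (hdiv : ∀ i, ∃ s t : ℂ, (s, t) ≠ (0, 0) ∧
      Cc i ^ m i ∣ (C s * A + C t * B)) :
    ∑ i : Fin n, (m i - 1) * (Cc i).totalDegree ≤ 2 * k - 3 := by
  obtain ⟨S, hS, hSirr, -⟩ := hirr
  obtain ⟨p, hp⟩ := hS.nonempty
  exact stmt_10_general hk hA hB hAB ⟨p.1, p.2, (hSirr p hp).2⟩ (fun i j => hCcop i j)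
    fun i => (Nat.sub_add_cancel (hm i)).symm ▸ hdiv i
end
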